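/- For all positive integers n and q and any set S of positive integers: 2^q F_{n,S} = sum_{l=0}^n binom(n,l) F_{l,S} (sum_{i=0}^{n-l} {n-l brace i}_S (q)_i) + sum_{l=1}^{q-1} 2^{q-l-1} (sum_{i=0}^n {n brace i}_S (l)_i). -/

import Mathlib

open scoped Classical

/-- The `S`-restricted Stirling number of the second kind: the number of partitions of
`[n]` into exactly `k` nonempty blocks, all of whose sizes lie in `S`. -/
noncomputable def sStirling (S : Set ℕ) (n k : ℕ) : ℕ :=
  Nat.card {P : Finpartition (Finset.univ : Finset (Fin n)) //
    P.parts.card = k ∧ ∀ b ∈ P.parts, b.card ∈ S}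

/-- The formal power series `E_S(x) = ∑_{s ∈ S} x^s / s!`. -/
noncomputable def ES (S : Set ℕ) : PowerSeries ℚ :=
  PowerSeries.mk fun n => if n ∈ S then ((n.factorial : ℚ))⁻¹ else 0

/-- The `S`-restricted Fubini number: the number of ordered set partitions of `[n]`
with all block sizes in `S`. -/
noncomputable def sFubini (S : Set ℕ) (n : ℕ) : ℕ :=
  ∑ k ∈ Finset.range (n + 1), k.factorial * sStirling S n k

/-!
Write `E = ∑_{s ∈ S} x^s / s!`. Choosing the blocks of an ordered partition one at a time shows that
`k! {n brace k}_S` has exponential generating function `E ^ k`. Hence, if `g` has exponential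
generating function `G`, then `n ↦ ∑ i, {n brace i}_S * g i` has exponential generating function
`G(E)`. For `g i = i!` this is `1 / (1 - E)`, for `g i = (q)_i` it is `(1 + E) ^ q`, and a binomial
convolution of sequences is a product of generating functions. The identity is therefore the
substitution `x = E` in
`2 ^ q / (1 - x) = (1 + x) ^ q / (1 - x) + ∑_{l < q} 2 ^ (q - 1 - l) (1 + x) ^ l`,
which follows from factoring `(1 + x) ^ q - 2 ^ q` with `(1 + x) - 2 = -(1 - x)`; its
term `l = 0` only affects the coefficient of `x ^ 0`.
-/

section ExponentialGeneratingFunctions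

open PowerSeries

/-- The exponential generating function `∑ a n * x ^ n / n!` of a sequence of natural numbers. It is
bundled as an additive map because the identities below are obtained from linear combinations of
sequences. -/
noncomputable def egf : (ℕ → ℕ) →+ ℚ⟦X⟧ where
  toFun a := mk fun n => (a n : ℚ) / n.factorial
  map_zero' := by ext; simp
  map_add' a b := by ext; simp [add_div]

theorem coeff_egf (a : ℕ → ℕ) (n : ℕ) : coeff n (egf a) = (a n : ℚ) / n.factorial := by
  simp [egf]

theorem egf_smul (c : ℕ) (a : ℕ → ℕ) : egf (c • a) = c * egf a := by
  rw [← nsmul_eq_mul]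
  exact map_nsmul egf c a

theorem egf_injective : Function.Injective egf := by
  intro a b hab
  ext n
  have hn : coeff n (egf a) = coeff n (egf b) := by rw [hab]
  rw [coeff_egf, coeff_egf, div_left_inj' (by positivity)] at hn
  exact_mod_cast hn

theorem egf_single_zero_one : egf (Pi.single 0 1) = 1 := by
  ext n
  rcases eq_or_ne n 0 with rfl | hn <;> simp [coeff_egf, coeff_one, *]

theorem egf_factorial : egf Nat.factorial = mk 1 := by
  ext n
  simp [coeff_egf, Nat.factorial_ne_zero]

theorem egf_descFactorial (q : ℕ) : egf q.descFactorial = (1 + X) ^ q := by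
  ext n
  rw [← binomialSeries_nat (R := ℚ), binomialSeries_coeff, coeff_egf,
    Nat.descFactorial_eq_factorial_mul_choose, Ring.choose_natCast]
  simp [Nat.factorial_ne_zero]

/-- The binomial convolution of two sequences: if `a` and `b` count structures on a set in terms of
its size, it counts the ways to split a set in two and put an `a`-structure on the first piece and a
`b`-structure on the second. -/
def binomialConvolution (a b : ℕ → ℕ) (n : ℕ) : ℕ :=
  ∑ l ∈ Finset.range (n + 1), n.choose l * a l * b (n - l)

theorem egf_binomialConvolution (a b : ℕ → ℕ) :
    egf (binomialConvolution a b) = egf a * egf b := by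
  ext n
  rw [coeff_egf, coeff_mul, Finset.Nat.sum_antidiagonal_eq_sum_range_succ_mk, binomialConvolution,
    Nat.cast_sum, Finset.sum_div]
  refine Finset.sum_congr rfl fun l hl => ?_
  rw [coeff_egf, coeff_egf, Nat.cast_mul, Nat.cast_mul,
    Nat.cast_choose ℚ (Finset.mem_range_succ_iff.mp hl)]
  field_simp

theorem sum_powerset_card_mul_card_sdiff {α : Type*} [DecidableEq α] (a b : ℕ → ℕ)
    (A : Finset α) :
    ∑ B ∈ A.powerset, a B.card * b (A \ B).card = binomialConvolution a b A.card := by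
  calc ∑ B ∈ A.powerset, a B.card * b (A \ B).card
      = ∑ B ∈ A.powerset, a B.card * b (A.card - B.card) :=
        Finset.sum_congr rfl fun B hB => by
          rw [Finset.card_sdiff_of_subset (Finset.mem_powerset.mp hB)]
    _ = binomialConvolution a b A.card := by
        rw [Finset.sum_powerset_apply_card fun l => a l * b (A.card - l)]
        simp only [binomialConvolution, smul_eq_mul, mul_assoc]

theorem two_pow_mul_mk_one {R : Type*} [CommRing R] (q : ℕ) :
    2 ^ q * (mk 1 : R⟦X⟧) =
      mk 1 * (1 + X) ^ q + ∑ l ∈ Finset.range q, 2 ^ (q - l - 1) * (1 + X) ^ l := by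
  have hgeom := geom_sum₂_mul (1 + X : R⟦X⟧) 2 q
  have hsum : ∑ l ∈ Finset.range q, (2 : R⟦X⟧) ^ (q - l - 1) * (1 + X) ^ l =
      ∑ l ∈ Finset.range q, (1 + X) ^ l * 2 ^ (q - 1 - l) :=
    Finset.sum_congr rfl fun l _ => by rw [mul_comm, Nat.sub_right_comm]
  rw [hsum]
  linear_combination mk 1 * hgeom +
    (∑ l ∈ Finset.range q, (1 + X : R⟦X⟧) ^ l * 2 ^ (q - 1 - l)) * mk_one_mul_one_sub_eq_one R

end ExponentialGeneratingFunctions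

section RestrictedPartitions

variable {α : Type*}

theorem sup_erase_parts [GeneralizedBooleanAlgebra α] [DecidableEq α] {a b : α}
    (P : Finpartition a) (hb : b ∈ P.parts) : (P.parts.erase b).sup id = a \ b := by
  have hdisj : Disjoint b ((P.parts.erase b).sup id) :=
    P.supIndep (Finset.erase_subset _ _) hb (Finset.notMem_erase _ _)
  calc (P.parts.erase b).sup id
      = (b ⊔ (P.parts.erase b).sup id) \ b := hdisj.sup_sdiff_cancel_left.symm
    _ = (insert b (P.parts.erase b)).sup id \ b := by rw [Finset.sup_insert, id]
    _ = a \ b := by rw [Finset.insert_erase hb, P.sup_parts]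

variable [DecidableEq α]

/-- The partitions of `A` into `k` blocks, all of whose sizes lie in `S`. -/
noncomputable def sPartitions (S : Set ℕ) (A : Finset α) (k : ℕ) : Finset (Finpartition A) :=
  {P | P.parts.card = k ∧ ∀ b ∈ P.parts, b.card ∈ S}

theorem mem_sPartitions {S : Set ℕ} {A : Finset α} {k : ℕ} {P : Finpartition A} :
    P ∈ sPartitions S A k ↔ P.parts.card = k ∧ ∀ b ∈ P.parts, b.card ∈ S := by
  simp [sPartitions]

theorem sStirling_eq_card_sPartitions (S : Set ℕ) (n k : ℕ) :
    sStirling S n k = (sPartitions S (Finset.univ : Finset (Fin n)) k).card := by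
  rw [sStirling, ← Nat.card_eq_finsetCard]
  simp only [mem_sPartitions]

theorem sStirling_eq_zero_of_lt (S : Set ℕ) {n k : ℕ} (hnk : n < k) : sStirling S n k = 0 := by
  rw [sStirling_eq_card_sPartitions, Finset.card_eq_zero, Finset.eq_empty_iff_forall_notMem]
  intro P hP
  have hcard := P.card_parts_le_card
  rw [(mem_sPartitions.mp hP).1, Finset.card_fin] at hcard
  omega

theorem card_sPartitions_zero (S : Set ℕ) (A : Finset α) :
    (sPartitions S A 0).card = (Pi.single 0 1 : ℕ → ℕ) A.card := by
  rcases A.eq_empty_or_nonempty with rfl | hA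
  · have hall : sPartitions S (∅ : Finset α) 0 = Finset.univ := by
      ext P
      simp [mem_sPartitions, Finpartition.parts_eq_empty_iff.mpr]
    rw [hall, Finset.card_empty, Pi.single_eq_same]
    exact Fintype.card_unique (α := Finpartition (⊥ : Finset α))
  · have hnone : sPartitions S A 0 = ∅ := by
      ext P
      simp [mem_sPartitions, Finpartition.parts_eq_empty_iff, hA.ne_empty]
    rw [hnone, Finset.card_empty, Pi.single_eq_of_ne hA.card_ne_zero]

theorem card_filter_mem_parts_sPartitions {S : Set ℕ} (hS : 0 ∉ S) {A b : Finset α} (hb : b ⊆ A)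
    (hbS : b.card ∈ S) (k : ℕ) :
    ((sPartitions S A (k + 1)).filter fun P => b ∈ P.parts).card =
      (sPartitions S (A \ b) k).card := by
  have hb_ne : b ≠ ⊥ := by
    rintro rfl
    exact hS hbS
  have hb_notMem (Q : Finpartition (A \ b)) : b ∉ Q.parts := fun hbQ =>
    hb_ne <| disjoint_sdiff_self_right.eq_bot_of_le (Q.le hbQ)
  symm
  refine Finset.card_bij
    (fun Q _ => Q.extend hb_ne disjoint_sdiff_self_left (sdiff_sup_cancel hb)) ?_ ?_ ?_
  · intro Q hQ
    rw [mem_sPartitions] at hQ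
    rw [Finset.mem_filter, mem_sPartitions, Finpartition.card_extend, hQ.1]
    refine ⟨⟨rfl, ?_⟩, Finset.mem_insert_self _ _⟩
    exact (Finset.forall_mem_insert _ _ _).mpr ⟨hbS, hQ.2⟩
  · intro Q _ Q' _ hQQ'
    have hinsert : insert b Q.parts = insert b Q'.parts := congrArg Finpartition.parts hQQ'
    ext1
    rw [← Finset.erase_insert (hb_notMem Q), hinsert, Finset.erase_insert (hb_notMem Q')]
  · intro P hP
    rw [Finset.mem_filter, mem_sPartitions] at hP
    obtain ⟨⟨hcard, hsizes⟩, hbP⟩ := hP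
    refine ⟨P.ofSubset (Finset.erase_subset b _) (sup_erase_parts P hbP), ?_, ?_⟩
    · rw [mem_sPartitions]
      refine ⟨?_, fun c hc => hsizes c (Finset.mem_of_mem_erase hc)⟩
      rw [Finpartition.ofSubset_parts, Finset.card_erase_of_mem hbP, hcard, Nat.add_sub_cancel]
    · ext1
      exact Finset.insert_erase hbP

theorem succ_mul_card_sPartitions_succ {S : Set ℕ} (hS : 0 ∉ S) (A : Finset α) (k : ℕ) :
    (k + 1) * (sPartitions S A (k + 1)).card =
      ∑ b ∈ A.powerset, S.indicator 1 b.card * (sPartitions S (A \ b) k).card := by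
  calc (k + 1) * (sPartitions S A (k + 1)).card
      = ∑ P ∈ sPartitions S A (k + 1), (A.powerset.filter fun b => b ∈ P.parts).card := by
        rw [mul_comm, Finset.sum_const_nat]
        intro P hP
        rw [← (mem_sPartitions.mp hP).1]
        congr 1
        ext b
        simpa using fun hb => P.le hb
    _ = ∑ b ∈ A.powerset, ((sPartitions S A (k + 1)).filter fun P => b ∈ P.parts).card := by
        simp only [Finset.card_filter]
        exact Finset.sum_comm
    _ = ∑ b ∈ A.powerset, S.indicator 1 b.card * (sPartitions S (A \ b) k).card := by
        refine Finset.sum_congr rfl fun b hb => ?_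
        by_cases hbS : b.card ∈ S
        · rw [card_filter_mem_parts_sPartitions hS (Finset.mem_powerset.mp hb) hbS,
            Set.indicator_of_mem hbS, Pi.one_apply, one_mul]
        · rw [Set.indicator_of_notMem hbS, zero_mul, Finset.card_eq_zero,
            Finset.filter_eq_empty_iff]
          exact fun P hP hbP => hbS ((mem_sPartitions.mp hP).2 b hbP)

/-- The number of ways to cut a set of size `n` into a sequence of `k` blocks with sizes in `S`,
counted by choosing the first block and then cutting the rest into `k - 1` blocks. -/
noncomputable def orderedSStirling (S : Set ℕ) : ℕ → ℕ → ℕ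
  | 0 => Pi.single 0 1
  | k + 1 => binomialConvolution (S.indicator 1) (orderedSStirling S k)

theorem factorial_mul_card_sPartitions {S : Set ℕ} (hS : 0 ∉ S) (A : Finset α) (k : ℕ) :
    k.factorial * (sPartitions S A k).card = orderedSStirling S k A.card := by
  induction k generalizing A with
  | zero => rw [Nat.factorial_zero, one_mul, card_sPartitions_zero, orderedSStirling]
  | succ k ih =>
    rw [Nat.factorial_succ, mul_right_comm, succ_mul_card_sPartitions_succ hS, mul_comm,
      Finset.mul_sum, orderedSStirling, ← sum_powerset_card_mul_card_sdiff]
    exact Finset.sum_congr rfl fun b _ => by rw [← ih, mul_left_comm]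

end RestrictedPartitions

section StirlingTransform

open PowerSeries

theorem ES_eq_egf (S : Set ℕ) : ES S = egf (S.indicator 1) := by
  ext n
  by_cases hn : n ∈ S <;> simp [ES, coeff_egf, hn]

theorem hasSubst_ES {S : Set ℕ} (hS : 0 ∉ S) : HasSubst (ES S) :=
  HasSubst.of_constantCoeff_zero' <| by
    rw [← coeff_zero_eq_constantCoeff_apply, ES, coeff_mk, if_neg hS]

theorem egf_orderedSStirling (S : Set ℕ) (k : ℕ) : egf (orderedSStirling S k) = ES S ^ k := by
  induction k with
  | zero => rw [orderedSStirling, egf_single_zero_one, pow_zero]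
  | succ k ih => rw [orderedSStirling, egf_binomialConvolution, ih, ← ES_eq_egf, pow_succ']

theorem coeff_ES_pow {S : Set ℕ} (hS : 0 ∉ S) (n k : ℕ) :
    coeff n (ES S ^ k) = (k.factorial * sStirling S n k : ℚ) / n.factorial := by
  rw [← egf_orderedSStirling, coeff_egf, sStirling_eq_card_sPartitions, ← Nat.cast_mul,
    factorial_mul_card_sPartitions hS, Finset.card_fin]

/-- The `S`-restricted Stirling transform of a sequence `g`. The sums of the paper are its values:
`g i = i!` gives `F_{n,S}`, and `g i = (q)_i` gives the inner sums. -/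
noncomputable def sStirlingTransform (S : Set ℕ) (g : ℕ → ℕ) (n : ℕ) : ℕ :=
  ∑ i ∈ Finset.range (n + 1), sStirling S n i * g i

theorem sStirlingTransform_factorial (S : Set ℕ) :
    sStirlingTransform S Nat.factorial = sFubini S :=
  funext fun _ => Finset.sum_congr rfl fun _ _ => mul_comm _ _

theorem egf_sStirlingTransform {S : Set ℕ} (hS : 0 ∉ S) (g : ℕ → ℕ) :
    egf (sStirlingTransform S g) = (egf g).subst (ES S) := by
  ext n
  have hterm (k : ℕ) : coeff k (egf g) • coeff n (ES S ^ k) =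
      (sStirling S n k * g k : ℚ) / n.factorial := by
    rw [coeff_egf, coeff_ES_pow hS, smul_eq_mul]
    field_simp
  have hsupp : (Function.support fun k => coeff k (egf g) • coeff n (ES S ^ k)) ⊆
      Finset.range (n + 1) := by
    intro k hk
    by_contra hkn
    refine hk ((hterm k).trans ?_)
    rw [sStirling_eq_zero_of_lt S (by simpa using hkn), Nat.cast_zero, zero_mul, zero_div]
  rw [coeff_subst' (hasSubst_ES hS), finsum_eq_sum_of_support_subset _ hsupp, coeff_egf,
    sStirlingTransform, Nat.cast_sum, Finset.sum_div]
  exact Finset.sum_congr rfl fun k _ => by rw [hterm, Nat.cast_mul]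

theorem two_pow_mul_sFubini {S : Set ℕ} (hS : 0 ∉ S) (n q : ℕ) :
    2 ^ q * sFubini S n =
      binomialConvolution (sFubini S) (sStirlingTransform S q.descFactorial) n +
        ∑ l ∈ Finset.range q, 2 ^ (q - l - 1) * sStirlingTransform S l.descFactorial n := by
  have hseq : 2 ^ q • sFubini S =
      binomialConvolution (sFubini S) (sStirlingTransform S q.descFactorial) +
        ∑ l ∈ Finset.range q, 2 ^ (q - l - 1) • sStirlingTransform S l.descFactorial := by
    apply egf_injective
    have hsubst := congrArg (substAlgHom (R := ℚ) (hasSubst_ES hS)) (two_pow_mul_mk_one q)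
    rw [← sStirlingTransform_factorial]
    simp only [map_add, map_sum, egf_smul, egf_binomialConvolution, egf_sStirlingTransform hS,
      egf_factorial, egf_descFactorial, ← coe_substAlgHom (hasSubst_ES hS),
      Nat.cast_pow, Nat.cast_ofNat]
    simpa only [map_add, map_mul, map_sum, map_pow, map_ofNat] using hsubst
  simpa using congrFun hseq n

theorem sStirlingTransform_descFactorial_zero {S : Set ℕ} (hS : 0 ∉ S) :
    sStirlingTransform S (Nat.descFactorial 0) = Pi.single 0 1 :=
  egf_injective <| by
    rw [egf_sStirlingTransform hS, egf_descFactorial, pow_zero, egf_single_zero_one,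
      ← coe_substAlgHom (hasSubst_ES hS), map_one]

end StirlingTransform

/-- for positive integers `n`, `q`:
`2^q F_{n,S} = ∑_{l=0}^n C(n,l) F_{l,S} (∑_{i=0}^{n-l} {n-l brace i}_S (q)_i)
  + ∑_{l=1}^{q-1} 2^{q-l-1} (∑_{i=0}^n {n brace i}_S (l)_i)`. -/
theorem sFubini_poonen_identity (S : Set ℕ) (hS : 0 ∉ S) (n q : ℕ)
    (hn : 0 < n) (hq : 0 < q) :
    2 ^ q * sFubini S n =
      (∑ l ∈ Finset.range (n + 1), n.choose l * sFubini S l *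
        ∑ i ∈ Finset.range (n - l + 1), sStirling S (n - l) i * q.descFactorial i) +
      ∑ l ∈ Finset.Ico 1 q, 2 ^ (q - l - 1) *
        ∑ i ∈ Finset.range (n + 1), sStirling S n i * l.descFactorial i := by
  rw [two_pow_mul_sFubini hS, Finset.range_eq_Ico (a := q), Finset.sum_eq_sum_Ico_succ_bot hq,
    sStirlingTransform_descFactorial_zero hS, Pi.single_eq_of_ne hn.ne', mul_zero, zero_add]
  simp only [binomialConvolution, sStirlingTransform]
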